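/- Converse part of Theorem 4 (cyclic graph with 1st neighbor privacy): for every integer N ≥ 5 and every PIR scheme with cyclic-graph storage on N servers and privacy sets 𝒫_n = ℐ_n ∪ ℐ_{n+1} = {n−1, n, n+1} (mod N), the total download cost satisfies Σ_{k=1}^{N} D_k ≥ 2N·L; equivalently, the rate satisfies R ≤ 1/2. -/

import Mathlib

/-!
Write `𝒬` for the tuple of all queries, `W_{≠i}` for the messages other than `W i`, and index
servers and messages cyclically.  Put

* `a n = H(A n n | W_{≠n}, 𝒬)`, what the answer of server `n` carries about `W n`;
* `b n = H(A n (n-1) | W_{≠n-1}, 𝒬)`, what it carries about `W (n-1)`.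

By privacy at server `n` both numbers are the same whether `n - 1` or `n` is being retrieved.

*Decoding* (`decode_bound`).  Given `W_{≠k}` and `𝒬`, all answers except those of servers `k` and
`k + 1` are determined, so those two must reveal `W k`: `L ≤ a k + b (k+1)`.

*Interference* (`download_bound`).  The answers for index `k` determine `W k`, and given `W k` and
`𝒬` the answers of servers `k` and `k + 1` still carry `b k` about `W (k-1)` and `a (k+1)` about
`W (k+1)`, independently of each other as `k - 1 ≠ k + 1`.  Thus `D k ≥ L + a (k+1) + b k`.

Summing over `k` and reindexing cyclically gives
`∑ D k ≥ N L + ∑ (a (k+1) + b k) = N L + ∑ (a k + b (k+1)) ≥ 2 N L`.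

The only analytic input is the submodularity of Shannon entropy, `H_submod`, which follows from
`log x ≤ x - 1`.
-/

/-!
Formalization of PIR with arbitrary privacy requirement sets.

A PIR scheme with `N` servers and `K` messages of equal length `L > 0` is modeled
by finitely-valued random variables on a common finite probability space:
messages `W 1, …, W K`, and for each server `n ∈ [1:N]` and desired index
`k ∈ [1:K]`, a query `Q n k` and an answer `A n k`.  Shannon entropy,
conditional entropy and (conditional) mutual information are defined from the
probability mass function `p`.
-/

open scoped Classical BigOperators

noncomputable section

/-- A PIR scheme: a finite probability space together with the message, query and
answer random variables.  Only the variables indexed by `n ∈ [1:N]`, `k ∈ [1:K]`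
are meaningful; all random variables are finitely valued (`ℕ`-valued on a finite
sample space). -/
structure PIRScheme (N K : ℕ) (L : ℝ) where
  /-- the sample space -/
  Ω : Type
  [fin : Fintype Ω]
  /-- the probability mass function -/
  p : Ω → ℝ
  p_nonneg : ∀ ω, 0 ≤ p ω
  p_sum : ∑ ω : Ω, p ω = 1
  /-- the messages `W i`, `i ∈ [1:K]` -/
  W : ℕ → Ω → ℕ
  /-- `Q n k` is the query sent to server `n` when retrieving message `k` -/
  Q : ℕ → ℕ → Ω → ℕ
  /-- `A n k` is the answer of server `n` when retrieving message `k` -/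
  A : ℕ → ℕ → Ω → ℕ

attribute [instance] PIRScheme.fin

namespace PIRScheme

variable {N K : ℕ} {L : ℝ} (S : PIRScheme N K L)

/-- `P[X = v]`. -/
def prob {α : Type*} (X : S.Ω → α) (v : α) : ℝ :=
  ∑ ω : S.Ω, if X ω = v then S.p ω else 0

/-- Shannon entropy `H(X)`. -/
def H {α : Type*} (X : S.Ω → α) : ℝ :=
  - ∑ ω : S.Ω, S.p ω * Real.log (S.prob X (X ω))

/-- Conditional entropy `H(X | Y) := H(X, Y) - H(Y)`. -/
def Hc {α β : Type*} (X : S.Ω → α) (Y : S.Ω → β) : ℝ :=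
  S.H (fun ω => (X ω, Y ω)) - S.H Y

/-- Mutual information `I(X ; Y) := H(X) + H(Y) - H(X, Y)`. -/
def MI {α β : Type*} (X : S.Ω → α) (Y : S.Ω → β) : ℝ :=
  S.H X + S.H Y - S.H (fun ω => (X ω, Y ω))

/-- Conditional mutual information `I(X ; Y | Z) := H(X|Z) + H(Y|Z) - H(X,Y|Z)`. -/
def MIc {α β γ : Type*} (X : S.Ω → α) (Y : S.Ω → β) (Z : S.Ω → γ) : ℝ :=
  S.Hc X Z + S.Hc Y Z - S.Hc (fun ω => (X ω, Y ω)) Z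

/-- The joint random variable `(W j)_{j ∈ T}` of a subcollection of the messages. -/
def jointW (T : Finset ℕ) : S.Ω → (T → ℕ) := fun ω j => S.W j ω

/-- The joint random variable of all `K` messages. -/
def allW : S.Ω → (Finset.Icc 1 K → ℕ) := S.jointW (Finset.Icc 1 K)

/-- `𝒬`: the tuple of all queries `Q n k`, `n ∈ [1:N]`, `k ∈ [1:K]`. -/
def allQ : S.Ω → ((Finset.Icc 1 N ×ˢ Finset.Icc 1 K : Finset (ℕ × ℕ)) → ℕ) :=
  fun ω x => S.Q x.1.1 x.1.2 ω

/-- The tuple of answers `(A 1 k, …, A N k)` when retrieving message `k`. -/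
def ansVec (k : ℕ) : S.Ω → (Finset.Icc 1 N → ℕ) := fun ω n => S.A n k ω

/-- The download cost `D k := ∑_{n=1}^N H(A n k)`. -/
def D (k : ℕ) : ℝ := ∑ n ∈ Finset.Icc 1 N, S.H (S.A n k)

/-- The rate `R := K ⬝ L / ∑_{k=1}^K D k`. -/
def rate : ℝ := (K * L) / ∑ k ∈ Finset.Icc 1 K, S.D k

/-- Validity of a PIR scheme with respect to storage index sets `I n` and privacy
requirement sets `P n`:
(messages) the messages each have entropy `L` and are mutually independent;
(i) the messages are independent of all the queries;
(ii) each answer is a function of the server's storage and received query;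
(iii) privacy: for all `θ1, θ2 ∈ P n` and every subcollection `T` of the messages,
  the answer of server `n` has the same conditional entropy whether `θ1` or `θ2`
  is being retrieved;
(iv) decodability: message `k` is determined by all the answers and the queries. -/
structure IsValid (S : PIRScheme N K L) (I P : ℕ → Finset ℕ) : Prop where
  msg_entropy : ∀ i ∈ Finset.Icc 1 K, S.H (S.W i) = L
  msg_indep : S.H S.allW = ∑ i ∈ Finset.Icc 1 K, S.H (S.W i)
  stor_sub_priv : ∀ n ∈ Finset.Icc 1 N, I n ⊆ P n
  priv_sub : ∀ n ∈ Finset.Icc 1 N, P n ⊆ Finset.Icc 1 K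
  query_indep : S.MI S.allW S.allQ = 0
  ans_det : ∀ n ∈ Finset.Icc 1 N, ∀ k ∈ Finset.Icc 1 K,
    S.Hc (S.A n k) (fun ω => (S.jointW (I n) ω, S.Q n k ω)) = 0
  privacy : ∀ n ∈ Finset.Icc 1 N, ∀ θ1 ∈ P n, ∀ θ2 ∈ P n, ∀ T ⊆ Finset.Icc 1 K,
    S.Hc (S.A n θ1) (fun ω => (S.jointW T ω, S.allQ ω)) =
      S.Hc (S.A n θ2) (fun ω => (S.jointW T ω, S.allQ ω))
  decodable : ∀ k ∈ Finset.Icc 1 K, S.Hc (S.W k) (fun ω => (S.ansVec k ω, S.allQ ω)) = 0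

end PIRScheme

/-- Path-graph storage on `N` servers (`K = N - 1` messages):
`𝒲_1 = {W 1}`, `𝒲_n = {W (n-1), W n}` for `2 ≤ n ≤ N - 1`, `𝒲_N = {W (N-1)}`. -/
def pathIndex (N : ℕ) : ℕ → Finset ℕ := fun n =>
  if n = 1 then {1} else if n = N then {N - 1} else {n - 1, n}

/-- Modified-edge-server privacy sets on the path graph:
`𝒫_1 = 𝒫_2 = {1, 2}`, `𝒫_N = 𝒫_{N-1} = {N-2, N-1}`, and `𝒫_n = {n-1, n}`
for `2 ≤ n ≤ N - 1`. -/
def pathModEdgePriv (N : ℕ) : ℕ → Finset ℕ := fun n =>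
  if n ≤ 2 then {1, 2} else if N - 1 ≤ n then {N - 2, N - 1} else {n - 1, n}

/-- The representative of `m` modulo `N` lying in `{1, …, N}` (so that index `0`
is identified with index `N`). -/
def cyc (N : ℕ) (m : ℤ) : ℕ := (((m - 1) % (N : ℤ)) + 1).toNat

/-- Cyclic-graph storage on `N` servers (`K = N` messages):
`𝒲_n = {W (n-1), W n}` with indices mod `N`, i.e. `ℐ_n = {n - 1, n} (mod N)`. -/
def cycIndex (N : ℕ) : ℕ → Finset ℕ := fun n => {cyc N ((n : ℤ) - 1), cyc N (n : ℤ)}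

/-- The cyclic interval `[a : a + len - 1]` of `len` consecutive indices mod `N`,
as a subset of `{1, …, N}`. -/
def cycInterval (N : ℕ) (a : ℤ) (len : ℕ) : Finset ℕ :=
  (Finset.range len).image fun j => cyc N (a + j)

namespace PIRScheme

variable {N K : ℕ} {L : ℝ} (S : PIRScheme N K L)

/-! ### Shannon entropy -/

section Entropy

universe u v w x
variable {α : Type u} {β : Type v} {γ : Type w} {δ : Type x}

lemma prob_nonneg (X : S.Ω → α) (v : α) : 0 ≤ S.prob X v :=
  Finset.sum_nonneg fun ω _ => by split_ifs <;> simp [S.p_nonneg]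

lemma p_le_prob (X : S.Ω → α) (ω : S.Ω) : S.p ω ≤ S.prob X (X ω) := by
  have := Finset.single_le_sum (f := fun ω' => if X ω' = X ω then S.p ω' else 0)
    (fun ω' _ => by split_ifs <;> simp [S.p_nonneg]) (Finset.mem_univ ω)
  simpa [prob] using this

/-- A random variable determined by another one has no more entropy. -/
lemma H_mono {X : S.Ω → α} {Y : S.Ω → β} (h : ∀ ω ω', Y ω = Y ω' → X ω = X ω') :
    S.H X ≤ S.H Y := by
  unfold H
  refine neg_le_neg (Finset.sum_le_sum fun ω _ => ?_)
  rcases (S.p_nonneg ω).eq_or_lt with h0 | h0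
  · simp [← h0]
  refine mul_le_mul_of_nonneg_left (Real.log_le_log (h0.trans_le (S.p_le_prob Y ω)) ?_) h0.le
  refine Finset.sum_le_sum fun ω' _ => ?_
  by_cases hy : Y ω' = Y ω
  · simp [hy, h _ _ hy]
  · simp only [hy, if_false]
    split_ifs <;> simp [S.p_nonneg]

lemma H_congr {X : S.Ω → α} {Y : S.Ω → β} (h : ∀ ω ω', X ω = X ω' ↔ Y ω = Y ω') :
    S.H X = S.H Y :=
  le_antisymm (S.H_mono fun ω ω' => (h ω ω').2) (S.H_mono fun ω ω' => (h ω ω').1)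

lemma H_const (c : α) : S.H (fun _ => c) = 0 := by
  simp [H, prob, S.p_sum]

/-- The total mass of a conditional distribution is at most one (it is zero when conditioning on
a null event, since division by zero gives zero). -/
lemma sum_cond_le_one (X : S.Ω → α) (v : α) :
    ∑ ω, (if X ω = v then S.p ω / S.prob X (X ω) else 0) ≤ 1 := by
  have : ∑ ω, (if X ω = v then S.p ω / S.prob X (X ω) else 0) = S.prob X v / S.prob X v := by
    conv_rhs => enter [1]; unfold prob
    rw [Finset.sum_div]
    refine Finset.sum_congr rfl fun ω _ => ?_
    split_ifs with h
    · rw [h]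
    · simp
  rw [this]
  exact div_self_le_one _

/-- The key sum in the proof of submodularity:
`∑ p(x,y,z) · (P(x,z) P(y,z)) / (P(x,y,z) P(z)) ≤ 1`. -/
lemma sum_ratio_le_one (X : S.Ω → α) (Y : S.Ω → β) (Z : S.Ω → γ) :
    ∑ ω, S.p ω * (S.prob (fun ω => (X ω, Z ω)) (X ω, Z ω) *
      S.prob (fun ω => (Y ω, Z ω)) (Y ω, Z ω) /
      (S.prob (fun ω => (X ω, Y ω, Z ω)) (X ω, Y ω, Z ω) * S.prob Z (Z ω))) ≤ 1 := by
  set T : S.Ω → ℝ := fun ω => S.prob (fun ω => (X ω, Y ω, Z ω)) (X ω, Y ω, Z ω) with hT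
  -- Expanding `P(x,z)` and `P(y,z)` over sample points `ω₁`, `ω₂` and summing over `ω` first
  -- leaves the law of `(ω₁, ω₂)` that is conditionally independent given `Z`.
  calc _ = ∑ ω, ∑ ω₁, ∑ ω₂, S.p ω₁ * (if Z ω₂ = Z ω₁ then S.p ω₂ / S.prob Z (Z ω₂) else 0) *
          (if (X ω, Y ω, Z ω) = (X ω₁, Y ω₂, Z ω₁) then S.p ω / T ω else 0) := by
        refine Finset.sum_congr rfl fun ω _ => ?_
        have e : S.p ω * (S.prob (fun ω => (X ω, Z ω)) (X ω, Z ω) *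
            S.prob (fun ω => (Y ω, Z ω)) (Y ω, Z ω) / (T ω * S.prob Z (Z ω))) =
            (S.prob (fun ω => (X ω, Z ω)) (X ω, Z ω) *
            S.prob (fun ω => (Y ω, Z ω)) (Y ω, Z ω)) * (S.p ω / (T ω * S.prob Z (Z ω))) := by
          ring
        rw [e]
        conv_lhs => enter [1]; unfold prob
        rw [Finset.sum_mul_sum, Finset.sum_mul]
        refine Finset.sum_congr rfl fun ω₁ _ => ?_
        rw [Finset.sum_mul]
        refine Finset.sum_congr rfl fun ω₂ _ => ?_
        simp only [Prod.mk.injEq]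
        by_cases h : (X ω₁ = X ω ∧ Z ω₁ = Z ω) ∧ (Y ω₂ = Y ω ∧ Z ω₂ = Z ω)
        · obtain ⟨⟨h1, h2⟩, h3, h4⟩ := h
          simp only [h1, h2, h3, h4, and_self, if_true]
          ring
        · have hl : (if X ω₁ = X ω ∧ Z ω₁ = Z ω then S.p ω₁ else 0) *
              (if Y ω₂ = Y ω ∧ Z ω₂ = Z ω then S.p ω₂ else 0) = 0 := by
            rcases not_and_or.1 h with h | h <;> simp [h]
          rw [hl, zero_mul]
          by_cases h1 : Z ω₂ = Z ω₁
          · have h2 : ¬ (X ω = X ω₁ ∧ Y ω = Y ω₂ ∧ Z ω = Z ω₁) := fun h' =>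
              h ⟨⟨h'.1.symm, h'.2.2.symm⟩, h'.2.1.symm, h1.trans h'.2.2.symm⟩
            simp [h2]
          · simp [h1]
    _ = ∑ ω₁, ∑ ω₂, S.p ω₁ * (if Z ω₂ = Z ω₁ then S.p ω₂ / S.prob Z (Z ω₂) else 0) *
          ∑ ω, (if (X ω, Y ω, Z ω) = (X ω₁, Y ω₂, Z ω₁) then S.p ω / T ω else 0) := by
        rw [Finset.sum_comm]
        refine Finset.sum_congr rfl fun ω₁ _ => ?_
        rw [Finset.sum_comm]
        exact Finset.sum_congr rfl fun ω₂ _ => (Finset.mul_sum _ _ _).symm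
    _ ≤ ∑ ω₁, ∑ ω₂, S.p ω₁ * (if Z ω₂ = Z ω₁ then S.p ω₂ / S.prob Z (Z ω₂) else 0) := by
        refine Finset.sum_le_sum fun ω₁ _ => Finset.sum_le_sum fun ω₂ _ => ?_
        refine mul_le_of_le_one_right (mul_nonneg (S.p_nonneg _) ?_)
          (le_of_eq_of_le ?_ (S.sum_cond_le_one (fun ω => (X ω, Y ω, Z ω)) (X ω₁, Y ω₂, Z ω₁)))
        · split_ifs
          · exact div_nonneg (S.p_nonneg _) (S.prob_nonneg _ _)
          · exact le_rfl
        · congr!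
    _ ≤ ∑ ω₁, S.p ω₁ := by
        refine Finset.sum_le_sum fun ω₁ _ => ?_
        rw [← Finset.mul_sum]
        exact mul_le_of_le_one_right (S.p_nonneg _) (S.sum_cond_le_one Z _)
    _ = 1 := S.p_sum

/-- Submodularity of entropy, i.e. nonnegativity of `I(X ; Y | Z)`. -/
lemma H_submod (X : S.Ω → α) (Y : S.Ω → β) (Z : S.Ω → γ) :
    S.H (fun ω => (X ω, Y ω, Z ω)) + S.H Z ≤
      S.H (fun ω => (X ω, Z ω)) + S.H (fun ω => (Y ω, Z ω)) := by
  have key := S.sum_ratio_le_one X Y Z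
  have h : ∀ ω, S.p ω * Real.log (S.prob (fun ω => (X ω, Z ω)) (X ω, Z ω)) +
      S.p ω * Real.log (S.prob (fun ω => (Y ω, Z ω)) (Y ω, Z ω)) -
      S.p ω * Real.log (S.prob (fun ω => (X ω, Y ω, Z ω)) (X ω, Y ω, Z ω)) -
      S.p ω * Real.log (S.prob Z (Z ω)) ≤
      S.p ω * (S.prob (fun ω => (X ω, Z ω)) (X ω, Z ω) *
      S.prob (fun ω => (Y ω, Z ω)) (Y ω, Z ω) /
      (S.prob (fun ω => (X ω, Y ω, Z ω)) (X ω, Y ω, Z ω) * S.prob Z (Z ω))) - S.p ω := by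
    intro ω
    rcases (S.p_nonneg ω).eq_or_lt with h0 | h0
    · simp [← h0]
    have h1 := h0.trans_le (S.p_le_prob (fun ω => (X ω, Z ω)) ω)
    have h2 := h0.trans_le (S.p_le_prob (fun ω => (Y ω, Z ω)) ω)
    have h3 := h0.trans_le (S.p_le_prob (fun ω => (X ω, Y ω, Z ω)) ω)
    have h4 := h0.trans_le (S.p_le_prob Z ω)
    have hl := Real.log_le_sub_one_of_pos (div_pos (mul_pos h1 h2) (mul_pos h3 h4))
    rw [Real.log_div (mul_pos h1 h2).ne' (mul_pos h3 h4).ne', Real.log_mul h1.ne' h2.ne',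
      Real.log_mul h3.ne' h4.ne'] at hl
    have := mul_le_mul_of_nonneg_left hl h0.le
    linarith
  have hs := Finset.sum_le_sum fun ω (_ : ω ∈ Finset.univ) => h ω
  simp only [Finset.sum_sub_distrib, Finset.sum_add_distrib, S.p_sum] at hs
  unfold H
  linarith

/-! ### Conditional entropy -/

lemma Hc_nonneg (X : S.Ω → α) (Z : S.Ω → γ) : 0 ≤ S.Hc X Z :=
  sub_nonneg.2 (S.H_mono fun ω ω' h => by simp_all)

/-- Conditioning on more reduces entropy. -/
lemma Hc_anti {X : S.Ω → α} {Z : S.Ω → γ} {Z' : S.Ω → δ}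
    (h : ∀ ω ω', Z' ω = Z' ω' → Z ω = Z ω') : S.Hc X Z' ≤ S.Hc X Z := by
  have h1 := S.H_submod X Z' Z
  have e1 : S.H (fun ω => (X ω, Z' ω, Z ω)) = S.H (fun ω => (X ω, Z' ω)) :=
    S.H_congr fun ω ω' => by have := h ω ω'; simp only [Prod.mk.injEq]; tauto
  have e2 : S.H (fun ω => (Z' ω, Z ω)) = S.H Z' :=
    S.H_congr fun ω ω' => by have := h ω ω'; simp only [Prod.mk.injEq]; tauto
  unfold Hc
  linarith

lemma Hc_mono {X : S.Ω → α} {X' : S.Ω → β} {Z : S.Ω → γ}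
    (h : ∀ ω ω', X' ω = X' ω' → Z ω = Z ω' → X ω = X ω') : S.Hc X Z ≤ S.Hc X' Z :=
  sub_le_sub_right (S.H_mono fun ω ω' => by
    have := h ω ω'; simp only [Prod.mk.injEq]; tauto) _

lemma Hc_chain (X : S.Ω → α) (Y : S.Ω → β) (Z : S.Ω → γ) :
    S.Hc (fun ω => (X ω, Y ω)) Z = S.Hc Y Z + S.Hc X (fun ω => (Y ω, Z ω)) := by
  have : S.H (fun ω => ((X ω, Y ω), Z ω)) = S.H (fun ω => (X ω, Y ω, Z ω)) :=
    S.H_congr fun ω ω' => by simp only [Prod.mk.injEq]; tauto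
  unfold Hc
  linarith

lemma Hc_pair_le (X : S.Ω → α) (Y : S.Ω → β) (Z : S.Ω → γ) :
    S.Hc (fun ω => (X ω, Y ω)) Z ≤ S.Hc X Z + S.Hc Y Z := by
  rw [S.Hc_chain, add_comm]
  gcongr
  exact S.Hc_anti fun ω ω' h => (Prod.mk.inj h).2

lemma Hc_le_H (X : S.Ω → α) (Z : S.Ω → γ) : S.Hc X Z ≤ S.H X := by
  have h := S.Hc_anti (X := X) (Z := fun _ => ()) (Z' := Z) fun _ _ _ => rfl
  have e : S.H (fun ω => (X ω, ())) = S.H X := S.H_congr fun ω ω' => by simp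
  unfold Hc at h ⊢
  rw [e, S.H_const] at h
  linarith

/-- Conditional subadditivity for a finite family of random variables. -/
lemma Hc_family_le {ι : Type*} (X : ι → S.Ω → α) (s : Finset ι) (Z : S.Ω → γ) :
    S.Hc (fun ω (i : s) => X i ω) Z ≤ ∑ i ∈ s, S.Hc (X i) Z := by
  induction s using Finset.induction_on with
  | empty =>
    rw [Finset.sum_empty]
    refine (S.Hc_le_H _ _).trans ((S.H_mono (Y := fun _ => ()) ?_).trans_eq (S.H_const _))
    intro ω ω' _
    funext i
    exact absurd i.2 (Finset.notMem_empty _)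
  | insert j s hj ih =>
    rw [Finset.sum_insert hj]
    refine le_trans ?_ (add_le_add_right ih _)
    refine le_trans (S.Hc_mono ?_) (S.Hc_pair_le _ _ _)
    intro ω ω' h _
    obtain ⟨h1, h2⟩ := Prod.mk.inj h
    funext ⟨i, hi⟩
    rcases Finset.mem_insert.1 hi with rfl | hi
    · exact h1
    · exact congrFun h2 ⟨i, hi⟩

/-- A variable that is almost surely a function of `Z` may be dropped from the conditioning. -/
lemma Hc_eq_of_det {X : S.Ω → α} {Y : S.Ω → β} {Z : S.Ω → γ} (h : S.Hc Y Z = 0) :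
    S.Hc X (fun ω => (Y ω, Z ω)) = S.Hc X Z := by
  refine le_antisymm (S.Hc_anti fun ω ω' h => (Prod.mk.inj h).2) ?_
  have h1 := S.Hc_chain X Y Z
  have h2 : S.Hc X Z ≤ S.Hc (fun ω => (X ω, Y ω)) Z :=
    S.Hc_mono fun ω ω' h _ => (Prod.mk.inj h).1
  linarith

end Entropy

/-! ### Messages, queries and answers of a valid scheme -/

variable {S}

/-- The joint variable of all messages except `W i`. -/
def othersW (S : PIRScheme N K L) (i : ℕ) : S.Ω → ((Finset.Icc 1 K).erase i → ℕ) :=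
  S.jointW ((Finset.Icc 1 K).erase i)

variable {I P : ℕ → Finset ℕ}

lemma IsValid.H_allW_allQ (hS : S.IsValid I P) :
    S.H (fun ω => (S.allW ω, S.allQ ω)) = K * L + S.H S.allQ := by
  have h1 := hS.query_indep
  have h2 := hS.msg_indep
  rw [Finset.sum_congr rfl hS.msg_entropy] at h2
  simp only [Finset.sum_const, Nat.card_Icc, nsmul_eq_mul, Nat.add_sub_cancel] at h2
  unfold MI at h1
  linarith

lemma IsValid.Hc_othersW_le {γ : Type*} (hS : S.IsValid I P) {k : ℕ} (hk : k ∈ Finset.Icc 1 K)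
    (Z : S.Ω → γ) : S.Hc (S.othersW k) Z ≤ (K - 1) * L := by
  refine (S.Hc_family_le S.W _ Z).trans ?_
  have h : ∀ i ∈ (Finset.Icc 1 K).erase k, S.Hc (S.W i) Z ≤ L := fun i hi =>
    (S.Hc_le_H _ _).trans_eq (hS.msg_entropy i (Finset.mem_of_mem_erase hi))
  refine (Finset.sum_le_card_nsmul _ _ _ h).trans_eq ?_
  have : 1 ≤ K := (Finset.mem_Icc.1 hk).1.trans (Finset.mem_Icc.1 hk).2
  rw [Finset.card_erase_of_mem hk, Nat.card_Icc, nsmul_eq_mul, Nat.add_sub_cancel]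
  push_cast [this]
  ring

lemma allW_eq_of_others {k : ℕ} {ω ω' : S.Ω} (h1 : S.W k ω = S.W k ω')
    (h2 : S.othersW k ω = S.othersW k ω') : S.allW ω = S.allW ω' := by
  funext ⟨i, hi⟩
  by_cases hik : i = k
  · subst hik; exact h1
  · exact congrFun h2 ⟨i, Finset.mem_erase.2 ⟨hik, hi⟩⟩

/-- A message keeps its full entropy given the queries and all the other messages. -/
lemma IsValid.le_Hc_W (hS : S.IsValid I P) {k : ℕ} (hk : k ∈ Finset.Icc 1 K) :
    L ≤ S.Hc (S.W k) (fun ω => (S.othersW k ω, S.allQ ω)) := by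
  have h1 := hS.H_allW_allQ
  have h2 := hS.Hc_othersW_le hk S.allQ
  have h3 : S.H (fun ω => (S.allW ω, S.allQ ω)) ≤
      S.H (fun ω => (S.W k ω, S.othersW k ω, S.allQ ω)) :=
    S.H_mono fun ω ω' h => by
      simp only [Prod.mk.injEq] at h ⊢
      exact ⟨allW_eq_of_others h.1 h.2.1, h.2.2⟩
  unfold Hc at h2 ⊢
  linarith

/-- An answer is determined by any `Z` that determines the queries and the server's storage. -/
lemma IsValid.Hc_ans_eq_zero {γ : Type*} (hS : S.IsValid I P) {n k : ℕ}
    (hn : n ∈ Finset.Icc 1 N) (hk : k ∈ Finset.Icc 1 K) {Z : S.Ω → γ}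
    (hW : ∀ i ∈ I n, ∀ ω ω', Z ω = Z ω' → S.W i ω = S.W i ω')
    (hQ : ∀ ω ω', Z ω = Z ω' → S.allQ ω = S.allQ ω') : S.Hc (S.A n k) Z = 0 := by
  refine le_antisymm ((S.Hc_anti ?_).trans_eq (hS.ans_det n hn k hk)) (S.Hc_nonneg _ _)
  intro ω ω' h
  refine Prod.ext (funext fun i => hW i i.2 ω ω' h) ?_
  exact congrFun (hQ ω ω' h) ⟨(n, k), Finset.mem_product.2 ⟨hn, hk⟩⟩

/-- If `W k` is stored only at servers `k` and `m`, the answers of these two servers carry at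
least `L` about `W k`. -/
lemma IsValid.decode_bound (hS : S.IsValid I P) {k m : ℕ} (hk : k ∈ Finset.Icc 1 K)
    (hI : ∀ n ∈ Finset.Icc 1 N, n ≠ k → n ≠ m → I n ⊆ (Finset.Icc 1 K).erase k) :
    L ≤ S.Hc (S.A k k) (fun ω => (S.othersW k ω, S.allQ ω)) +
      S.Hc (S.A m k) (fun ω => (S.othersW k ω, S.allQ ω)) := by
  set Z := fun ω => (S.othersW k ω, S.allQ ω) with hZ
  set B := fun ω => (S.A k k ω, S.A m k ω) with hB
  refine le_trans ?_ (S.Hc_pair_le (S.A k k) (S.A m k) Z)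
  -- given `Z`, the pair of answers `B` determines all answers, hence `W k`
  have hans : S.Hc (S.ansVec k) (fun ω => (B ω, Z ω)) = 0 := by
    refine le_antisymm ((S.Hc_family_le (fun n => S.A n k) _ _).trans ?_) (S.Hc_nonneg _ _)
    refine (Finset.sum_eq_zero fun n hn => ?_).le
    by_cases h : n = k ∨ n = m
    · have : S.Hc (S.A n k) (fun ω => (B ω, Z ω)) ≤ S.Hc (fun _ => ()) (fun ω => (B ω, Z ω)) :=
        S.Hc_mono fun ω ω' _ h' => by
          simp only [hB, Prod.mk.injEq] at h'
          rcases h with rfl | rfl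
          exacts [h'.1.1, h'.1.2]
      exact le_antisymm (this.trans ((S.Hc_le_H _ _).trans_eq (S.H_const _))) (S.Hc_nonneg _ _)
    · push Not at h
      refine hS.Hc_ans_eq_zero hn hk (fun i hi ω ω' h' => ?_) (fun ω ω' h' => ?_)
      · simp only [hZ, Prod.mk.injEq] at h'
        exact congrFun h'.2.1 ⟨i, hI n hn h.1 h.2 hi⟩
      · simp only [hZ, Prod.mk.injEq] at h'
        exact h'.2.2
  have hdec : S.Hc (S.W k) (fun ω => (B ω, Z ω)) = 0 := by
    refine le_antisymm ?_ (S.Hc_nonneg _ _)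
    rw [← S.Hc_eq_of_det hans, ← hS.decodable k hk]
    exact S.Hc_anti fun ω ω' h => by
      simp only [hZ, Prod.mk.injEq] at h ⊢
      exact ⟨h.1, h.2.2.2⟩
  have h1 := S.Hc_chain (S.W k) B Z
  have h2 : S.Hc (S.W k) Z ≤ S.Hc (fun ω => (S.W k ω, B ω)) Z :=
    S.Hc_mono fun ω ω' h _ => (Prod.mk.inj h).1
  have h3 := hS.le_Hc_W hk
  linarith

/-- The answers for index `k` carry, besides `W k`, what server `k` reveals about another message
`W j` and what server `m` reveals about another message `W i`, provided server `m` does not store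
`W j`. -/
lemma IsValid.download_bound (hS : S.IsValid I P) {k m i j : ℕ} (hk : k ∈ Finset.Icc 1 K)
    (hkN : k ∈ Finset.Icc 1 N) (hm : m ∈ Finset.Icc 1 N) (hik : k ≠ i) (hjk : k ≠ j)
    (hI : I m ⊆ (Finset.Icc 1 K).erase j) :
    L + S.Hc (S.A m k) (fun ω => (S.othersW i ω, S.allQ ω)) +
      S.Hc (S.A k k) (fun ω => (S.othersW j ω, S.allQ ω)) ≤ S.D k := by
  have hD : S.Hc (S.ansVec k) S.allQ ≤ S.D k :=
    (S.Hc_family_le (fun n => S.A n k) _ _).trans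
      (Finset.sum_le_sum fun n _ => S.Hc_le_H _ _)
  have h1 := S.Hc_chain (S.W k) (S.ansVec k) S.allQ
  rw [hS.decodable k hk] at h1
  have h2 : S.Hc (fun ω => ((S.A k k ω, S.A m k ω), S.W k ω)) S.allQ ≤
      S.Hc (fun ω => (S.W k ω, S.ansVec k ω)) S.allQ :=
    S.Hc_mono fun ω ω' h _ => by
      simp only [Prod.mk.injEq] at h ⊢
      exact ⟨⟨congrFun h.2 ⟨k, hkN⟩, congrFun h.2 ⟨m, hm⟩⟩, h.1⟩
  rw [S.Hc_chain, S.Hc_chain] at h2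
  have h3 : L ≤ S.Hc (S.W k) S.allQ := (hS.le_Hc_W hk).trans
    (S.Hc_anti fun ω ω' h => (Prod.mk.inj h).2)
  have h4 : S.Hc (S.A m k) (fun ω => (S.othersW i ω, S.allQ ω)) ≤
      S.Hc (S.A m k) (fun ω => (S.W k ω, S.allQ ω)) :=
    S.Hc_anti fun ω ω' h => by
      simp only [Prod.mk.injEq] at h ⊢
      exact ⟨congrFun h.1 ⟨k, Finset.mem_erase.2 ⟨hik, hk⟩⟩, h.2⟩
  -- the answer of server `m` is a function of `W_{≠j}` and the queries, so it is free to add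
  have hdet : S.Hc (S.A m k) (fun ω => (S.othersW j ω, S.allQ ω)) = 0 :=
    hS.Hc_ans_eq_zero hm hk
      (fun l hl ω ω' h => congrFun (Prod.mk.inj h).1 ⟨l, hI hl⟩)
      (fun ω ω' h => (Prod.mk.inj h).2)
  have h5 : S.Hc (S.A k k) (fun ω => (S.othersW j ω, S.allQ ω)) ≤
      S.Hc (S.A k k) (fun ω => (S.A m k ω, S.W k ω, S.allQ ω)) := by
    rw [← S.Hc_eq_of_det hdet]
    exact S.Hc_anti fun ω ω' h => by
      simp only [Prod.mk.injEq] at h ⊢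
      exact ⟨h.1, congrFun h.2.1 ⟨k, Finset.mem_erase.2 ⟨hjk, hk⟩⟩, h.2.2⟩
  linarith

end PIRScheme

/-! ### Cyclic indices -/

lemma cyc_self {N k : ℕ} (hk : k ∈ Finset.Icc 1 N) : cyc N (k : ℤ) = k := by
  rw [Finset.mem_Icc] at hk
  unfold cyc
  rw [Int.emod_eq_of_lt (by omega) (by omega)]
  omega

lemma cyc_succ {N k : ℕ} (hk : k ∈ Finset.Icc 1 N) :
    cyc N ((k : ℤ) + 1) = if k = N then 1 else k + 1 := by
  rw [Finset.mem_Icc] at hk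
  unfold cyc
  split_ifs with h
  · subst h; simp
  · rw [Int.emod_eq_of_lt (by omega) (by omega)]
    omega

lemma cyc_pred {N k : ℕ} (hk : k ∈ Finset.Icc 1 N) :
    cyc N ((k : ℤ) - 1) = if k = 1 then N else k - 1 := by
  rw [Finset.mem_Icc] at hk
  unfold cyc
  split_ifs with h
  · subst h
    have : ((1 : ℕ) : ℤ) - 1 - 1 = (N - 1) + N * (-1) := by push_cast; ring
    rw [this, Int.add_mul_emod_self_left, Int.emod_eq_of_lt (by omega) (by omega)]
    omega
  · rw [Int.emod_eq_of_lt (by omega) (by omega)]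
    omega

lemma self_mem_cycInterval {N n : ℕ} (hn : n ∈ Finset.Icc 1 N) :
    n ∈ cycInterval N ((n : ℤ) - 1) 3 :=
  Finset.mem_image.2 ⟨1, by simp, by simpa using cyc_self hn⟩

lemma pred_mem_cycInterval (N n : ℕ) :
    cyc N ((n : ℤ) - 1) ∈ cycInterval N ((n : ℤ) - 1) 3 :=
  Finset.mem_image.2 ⟨0, by simp, by simp⟩

/-- **Converse part of Theorem 4** (cyclic graph with 1st neighbor privacy): for
every `N ≥ 5` and every PIR scheme with cyclic-graph storage on `N` servers and
privacy sets `𝒫_n = ℐ_n ∪ ℐ_{n+1} = {n-1, n, n+1} (mod N)`, the total download cost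
satisfies `∑_{k=1}^N D k ≥ 2NL`; equivalently, `R ≤ 1/2`. -/
theorem cyclic_firstNeighbor_converse (N : ℕ) (hN : 5 ≤ N) (L : ℝ) (hL : 0 < L)
    (S : PIRScheme N N L)
    (hS : S.IsValid (cycIndex N) (fun n => cycInterval N ((n : ℤ) - 1) 3)) :
    2 * (N : ℝ) * L ≤ ∑ k ∈ Finset.Icc 1 N, S.D k ∧ S.rate ≤ 1 / 2 := by
  have hNpos : (0 : ℝ) < N := by exact_mod_cast (by omega : 0 < N)
  suffices h : 2 * (N : ℝ) * L ≤ ∑ k ∈ Finset.Icc 1 N, S.D k by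
    refine ⟨h, ?_⟩
    have h0 : 0 < 2 * (N : ℝ) * L := by positivity
    unfold PIRScheme.rate
    rw [div_le_iff₀ (h0.trans_le h)]
    linarith
  set s : ℕ → ℕ := fun k => cyc N ((k : ℤ) + 1) with hs
  set p : ℕ → ℕ := fun k => cyc N ((k : ℤ) - 1) with hp
  have hs' : ∀ k ∈ Finset.Icc 1 N, s k = if k = N then 1 else k + 1 := fun k hk => cyc_succ hk
  have hp' : ∀ k ∈ Finset.Icc 1 N, p k = if k = 1 then N else k - 1 := fun k hk => cyc_pred hk
  have hsm : ∀ k ∈ Finset.Icc 1 N, s k ∈ Finset.Icc 1 N := fun k hk => by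
    rw [hs' k hk]; rw [Finset.mem_Icc] at *; split_ifs <;> omega
  have hpm : ∀ k ∈ Finset.Icc 1 N, p k ∈ Finset.Icc 1 N := fun k hk => by
    rw [hp' k hk]; rw [Finset.mem_Icc] at *; split_ifs <;> omega
  have hps : ∀ k ∈ Finset.Icc 1 N, p (s k) = k := fun k hk => by
    rw [hp' _ (hsm k hk), hs' k hk]; rw [Finset.mem_Icc] at hk; split_ifs <;> omega
  have hsp : ∀ k ∈ Finset.Icc 1 N, s (p k) = k := fun k hk => by
    rw [hs' _ (hpm k hk), hp' k hk]; rw [Finset.mem_Icc] at hk; split_ifs <;> omega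
  have hsne : ∀ k ∈ Finset.Icc 1 N, k ≠ s k := fun k hk => by
    rw [hs' k hk]; rw [Finset.mem_Icc] at hk; split_ifs <;> omega
  have hpne : ∀ k ∈ Finset.Icc 1 N, k ≠ p k := fun k hk => by
    rw [hp' k hk]; rw [Finset.mem_Icc] at hk; split_ifs <;> omega
  have hspne : ∀ k ∈ Finset.Icc 1 N, s k ≠ p k := fun k hk => by
    rw [hs' k hk, hp' k hk]; rw [Finset.mem_Icc] at hk; split_ifs <;> omega
  have hI : ∀ n ∈ Finset.Icc 1 N, cycIndex N n = {p n, n} := fun n hn => by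
    simp only [cycIndex, hp, cyc_self hn]
  have hpP : ∀ n : ℕ, p n ∈ cycInterval N ((n : ℤ) - 1) 3 := fun n => pred_mem_cycInterval N n
  clear_value s p
  set a : ℕ → ℝ := fun n => S.Hc (S.A n n) (fun ω => (S.othersW n ω, S.allQ ω)) with ha
  set b : ℕ → ℝ := fun n =>
    S.Hc (S.A n (p n)) (fun ω => (S.othersW (p n) ω, S.allQ ω)) with hb
  have priv : ∀ n ∈ Finset.Icc 1 N, ∀ i, S.Hc (S.A n (p n)) (fun ω => (S.othersW i ω, S.allQ ω)) =
      S.Hc (S.A n n) (fun ω => (S.othersW i ω, S.allQ ω)) := fun n hn i =>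
    hS.privacy n hn _ (hpP n) _ (self_mem_cycInterval hn) _
      (Finset.erase_subset _ _)
  have h1 : ∀ k ∈ Finset.Icc 1 N, L ≤ a k + b (s k) := fun k hk => by
    simp only [ha, hb]
    rw [hps k hk]
    refine hS.decode_bound (m := s k) hk fun n hn hnk hnm => ?_
    have hpk : p n ≠ k := fun h => hnm (by rw [← h, hsp n hn])
    rw [hI n hn, Finset.insert_subset_iff, Finset.singleton_subset_iff]
    exact ⟨Finset.mem_erase.2 ⟨hpk, hpm n hn⟩, Finset.mem_erase.2 ⟨hnk, hn⟩⟩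
  have h2 : ∀ k ∈ Finset.Icc 1 N, L + a (s k) + b k ≤ S.D k := fun k hk => by
    simp only [ha, hb]
    rw [priv k hk, ← priv (s k) (hsm k hk), hps k hk]
    refine hS.download_bound hk hk (hsm k hk) (hsne k hk) (hpne k hk) ?_
    rw [hI _ (hsm k hk), hps k hk, Finset.insert_subset_iff, Finset.singleton_subset_iff]
    exact ⟨Finset.mem_erase.2 ⟨hpne k hk, hk⟩, Finset.mem_erase.2 ⟨hspne k hk, hsm k hk⟩⟩
  have shift : ∀ f : ℕ → ℝ, ∑ k ∈ Finset.Icc 1 N, f (s k) = ∑ k ∈ Finset.Icc 1 N, f k := fun f =>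
    Finset.sum_nbij' s p hsm hpm hps hsp fun _ _ => rfl
  have t1 := Finset.sum_le_sum h1
  have t2 := Finset.sum_le_sum h2
  simp only [Finset.sum_add_distrib, shift, Finset.sum_const, Nat.card_Icc, nsmul_eq_mul,
    Nat.add_sub_cancel] at t1 t2
  linarith
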